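/- For all named GS4 derivations P with conclusion ⊢Γ,A∨B, the branch-labeled axiom graph is invariant under inversion of the disjunction: ⟨⟨inv(P, A∨B)⟩⟩ = ⟨⟨P⟩⟩. -/

import Mathlib

open scoped Classical

noncomputable section

namespace GS4

/-- Named classical propositional formulas over atoms `α`, with names in `ℕ`. -/
inductive NForm (α : Type) : Type
  | atom : ℕ → α → NForm α
  | or   : NForm α → NForm α → NForm α
  | and  : NForm α → NForm α → NForm α

variable {α : Type}

/-- Name-preserving De Morgan negation, w.r.t. an involution `bar` on atoms. -/
def negF (bar : α → α) : NForm α → NForm α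
  | .atom x a => .atom x (bar a)
  | .or A B => .and (negF bar A) (negF bar B)
  | .and A B => .or (negF bar A) (negF bar B)

/-- The set of names occurring in a named formula. -/
def NForm.names : NForm α → Set ℕ
  | .atom x _ => {x}
  | .or A B => A.names ∪ B.names
  | .and A B => A.names ∪ B.names

/-- A named formula is sharing-free if every name occurs at most once in it. -/
def NForm.sharingFree : NForm α → Prop
  | .atom _ _ => True
  | .or A B => A.sharingFree ∧ B.sharingFree ∧ Disjoint A.names B.names
  | .and A B => A.sharingFree ∧ B.sharingFree ∧ Disjoint A.names B.names

def NForm.isAtom : NForm α → Prop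
  | .atom _ _ => True
  | _ => False

/-- Anonymous formulas (shapes): `A ≡ B` iff their shapes coincide. -/
inductive Shape (α : Type) : Type
  | atom : α → Shape α
  | or   : Shape α → Shape α → Shape α
  | and  : Shape α → Shape α → Shape α

def NForm.shape : NForm α → Shape α
  | .atom _ a => .atom a
  | .or A B => .or A.shape B.shape
  | .and A B => .and A.shape B.shape

/-- `HasAtom A x a`: the atomic formula `x:a` occurs in `A`. -/
def HasAtom : NForm α → ℕ → α → Prop
  | .atom y b, x, a => y = x ∧ b = a
  | .or A B, x, a => HasAtom A x a ∨ HasAtom B x a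
  | .and A B, x, a => HasAtom A x a ∨ HasAtom B x a

/-- Names of a finite set of named formulas. -/
def snames (Γ : Finset (NForm α)) : Set ℕ := ⋃ A ∈ Γ, A.names

/-- A finite set of named formulas is sharing-free if all its elements are
sharing-free with pairwise disjoint name sets. -/
def SFSet (Γ : Finset (NForm α)) : Prop :=
  (∀ A ∈ Γ, A.sharingFree) ∧
  ∀ A ∈ Γ, ∀ B ∈ Γ, A ≠ B → Disjoint A.names B.names

/-- `x:a` occurs in some formula of `Γ` (i.e. `Γ[x] = a` for sharing-free `Γ`). -/
def HasAtomS (Γ : Finset (NForm α)) (x : ℕ) (a : α) : Prop :=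
  ∃ A ∈ Γ, HasAtom A x a

/-- Branch sets of named formulas. -/
def BrF : NForm α → Set (Set ℕ)
  | .atom x _ => {{x}}
  | .or A B => {X | ∃ Y ∈ BrF A, ∃ Z ∈ BrF B, X = Y ∪ Z}
  | .and A B => BrF A ∪ BrF B

/-- Branch sets of sequents (finite sharing-free sets of named formulas). -/
def BrS (Γ : Finset (NForm α)) : Set (Set ℕ) :=
  {X | X ⊆ snames Γ ∧ ∀ A ∈ Γ, X ∩ A.names ∈ BrF A}

/-! ## Branch-labeled name graphs -/

/-- A branch-labeled name graph: vertices and a relation between unordered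
pairs of vertices and branch labels. -/
structure BLGraph : Type where
  verts : Set ℕ
  rel : Sym2 ℕ → Set ℕ → Prop

/-- Well-formedness of a bl-graph: related pairs consist of distinct vertices,
labels are sets of vertices, and each edge is included in its labels. -/
def BLGraph.IsBL (G : BLGraph) : Prop :=
  ∀ e X, G.rel e X → ¬ e.IsDiag ∧ X ⊆ G.verts ∧ ∀ v ∈ e, v ∈ X

def BLGraph.Edges (G : BLGraph) : Set (Sym2 ℕ) := {e | ∃ X, G.rel e X}

def BLGraph.Br (G : BLGraph) : Set (Set ℕ) := {X | ∃ e, G.rel e X}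

def BLGraph.union (G H : BLGraph) : BLGraph :=
  ⟨G.verts ∪ H.verts, fun e X => G.rel e X ∨ H.rel e X⟩

/-- Restriction `G↾_S` of a bl-graph. -/
def BLGraph.restrict (G : BLGraph) (S : Set ℕ) : BLGraph :=
  ⟨G.verts ∩ S, fun e X => G.rel e X ∧ X ⊆ S⟩

/-- The interface-relativized edge-branch relation `e ⊰^I_G X`. -/
def BLGraph.relI (G : BLGraph) (I : Set ℕ) (e : Sym2 ℕ) (X : Set ℕ) : Prop :=
  ∃ Y, G.rel e Y ∧ X = Y \ I

/-- `z 0, …, z (n-1)` is an `X`-labeled alternating path between `G` and `H`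
through the interface `I`. -/
def AltPath (G H : BLGraph) (I X : Set ℕ) (n : ℕ) (z : ℕ → ℕ) : Prop :=
  1 < n ∧
  (∀ i < n, ∀ j < n, z i = z j → i = j) ∧
  (∀ i, 0 < i → i + 1 < n → z i ∈ I) ∧
  ((∀ i, i + 1 < n →
      (Even i → G.relI I s(z i, z (i + 1)) X) ∧ (¬ Even i → H.relI I s(z i, z (i + 1)) X)) ∨
   (∀ i, i + 1 < n →
      (Even i → H.relI I s(z i, z (i + 1)) X) ∧ (¬ Even i → G.relI I s(z i, z (i + 1)) X)))

/-- Composition of bl-graphs over an interface `I`. -/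
def BLGraph.comp (G H : BLGraph) (I : Set ℕ) : BLGraph :=
  ⟨(G.verts ∪ H.verts) \ I,
   fun e X => ∃ n z, AltPath G H I X n z ∧ z 0 ∉ I ∧ z (n - 1) ∉ I ∧
     e = s(z 0, z (n - 1))⟩

/-- The weakening operator on bl-graphs: add vertices `V` and extend every
branch label by a member of `Brs`. -/
def blwk (V : Set ℕ) (Brs : Set (Set ℕ)) (G : BLGraph) : BLGraph :=
  ⟨G.verts ∪ V, fun e X => ∃ Y Z, G.rel e Y ∧ Z ∈ Brs ∧ X = Y ∪ Z⟩

/-- The bl-identity graph `id_{A,C}` on a pair of dual formulas. -/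
def blid : NForm α → NForm α → BLGraph
  | .atom x _, .atom y _ => ⟨{x, y}, fun e X => e = s(x, y) ∧ X = {x, y}⟩
  | .or A1 A2, .and C1 C2 =>
      (blwk A2.names (BrF A2) (blid A1 C1)).union (blwk A1.names (BrF A1) (blid A2 C2))
  | .and A1 A2, .or C1 C2 =>
      (blwk C2.names (BrF C2) (blid A1 C1)).union (blwk C1.names (BrF C1) (blid A2 C2))
  | _, _ => ⟨∅, fun _ _ => False⟩

/-! ## Simple name graphs -/

/-- A simple name graph. -/
structure NGraph : Type where
  verts : Set ℕ
  edges : Set (Sym2 ℕ)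

/-- Subgraph relation `H ⊑ G`. -/
def NGraph.Sub (H G : NGraph) : Prop := H.verts ⊆ G.verts ∧ H.edges ⊆ G.edges

def NGraph.union (G H : NGraph) : NGraph := ⟨G.verts ∪ H.verts, G.edges ∪ H.edges⟩

/-- Induced subgraph `G↾_S`. -/
def NGraph.restrict (G : NGraph) (S : Set ℕ) : NGraph :=
  ⟨G.verts ∩ S, {e ∈ G.edges | ∀ v ∈ e, v ∈ S}⟩

/-- Alternating paths between simple name graphs through an interface. -/
def NAltPath (G H : NGraph) (I : Set ℕ) (n : ℕ) (z : ℕ → ℕ) : Prop :=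
  0 < n ∧
  (∀ i < n, ∀ j < n, z i = z j → i = j) ∧
  (∀ i, 0 < i → i + 1 < n → z i ∈ I) ∧
  ((∀ i, i + 1 < n →
      (Even i → s(z i, z (i + 1)) ∈ G.edges) ∧ (¬ Even i → s(z i, z (i + 1)) ∈ H.edges)) ∨
   (∀ i, i + 1 < n →
      (Even i → s(z i, z (i + 1)) ∈ H.edges) ∧ (¬ Even i → s(z i, z (i + 1)) ∈ G.edges)))

/-- Composition of simple name graphs over an interface. -/
def NGraph.comp (G H : NGraph) (I : Set ℕ) : NGraph :=
  ⟨(G.verts ∪ H.verts) \ I,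
   {e | ∃ x y, x ≠ y ∧ x ∈ (G.verts ∪ H.verts) \ I ∧ y ∈ (G.verts ∪ H.verts) \ I ∧
        e = s(x, y) ∧ ∃ n z, NAltPath G H I n z ∧ z 0 = x ∧ z (n - 1) = y}⟩

/-- The identity graph `Id_{A,C}` on a pair of dual formulas. -/
def idg : NForm α → NForm α → NGraph
  | .atom x _, .atom y _ => ⟨{x, y}, {s(x, y)}⟩
  | .or A1 A2, .and C1 C2 => (idg A1 C1).union (idg A2 C2)
  | .and A1 A2, .or C1 C2 => (idg A1 C1).union (idg A2 C2)
  | _, _ => ⟨∅, ∅⟩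

/-- The edgeless (weakening) graph on the names of `Γ`. -/
def wkg (Γ : Finset (NForm α)) : NGraph := ⟨snames Γ, ∅⟩

/-! ## Named GS4 derivations -/

/-- Named GS4 derivation trees. -/
inductive Deriv (α : Type) : Type
  | ax (Γ : Finset (NForm α)) (A C : NForm α)
  | cut (A : NForm α) (P Q : Deriv α)
  | sup (P Q : Deriv α)
  | orI (A B : NForm α) (P : Deriv α)
  | andI (A B : NForm α) (P Q : Deriv α)

/-- Conclusion of a derivation tree. -/
def concl : Deriv α → Finset (NForm α)
  | .ax Γ A C => insert A (insert C Γ)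
  | .cut A P _ => (concl P).erase A
  | .sup P _ => concl P
  | .orI A B P => insert (NForm.or A B) (((concl P).erase A).erase B)
  | .andI A B P _ => insert (NForm.and A B) ((concl P).erase A)

/-- Well-formedness of derivation trees w.r.t. the atom involution `bar`:
each rule is applied correctly to sharing-free named sequents. -/
def WF (bar : α → α) : Deriv α → Prop
  | .ax Γ A C =>
      A.shape = (negF bar C).shape ∧
      A.sharingFree ∧ C.sharingFree ∧ SFSet Γ ∧
      Disjoint A.names C.names ∧
      Disjoint A.names (snames Γ) ∧ Disjoint C.names (snames Γ)
  | .cut A P Q =>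
      WF bar P ∧ WF bar Q ∧
      ∃ Γ : Finset (NForm α), A ∉ Γ ∧ negF bar A ∉ Γ ∧
        concl P = insert A Γ ∧ concl Q = insert (negF bar A) Γ ∧
        A.sharingFree ∧ SFSet Γ ∧ Disjoint A.names (snames Γ)
  | .sup P Q => WF bar P ∧ WF bar Q ∧ concl P = concl Q
  | .orI A B P =>
      WF bar P ∧
      ∃ Γ : Finset (NForm α), A ∉ Γ ∧ B ∉ Γ ∧ A ≠ B ∧
        concl P = insert A (insert B Γ) ∧
        A.sharingFree ∧ B.sharingFree ∧ SFSet Γ ∧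
        Disjoint A.names B.names ∧
        Disjoint A.names (snames Γ) ∧ Disjoint B.names (snames Γ)
  | .andI A B P Q =>
      WF bar P ∧ WF bar Q ∧
      ∃ Γ : Finset (NForm α), A ∉ Γ ∧ B ∉ Γ ∧
        concl P = insert A Γ ∧ concl Q = insert B Γ ∧
        A.sharingFree ∧ B.sharingFree ∧ SFSet Γ ∧
        Disjoint A.names B.names ∧
        Disjoint A.names (snames Γ) ∧ Disjoint B.names (snames Γ)

/-- A derivation is cut-free if it contains no cut rule. -/
def CutFree : Deriv α → Prop
  | .ax _ _ _ => True
  | .cut _ _ _ => False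
  | .sup P Q => CutFree P ∧ CutFree Q
  | .orI _ _ P => CutFree P
  | .andI _ _ P Q => CutFree P ∧ CutFree Q

/-- The branch-labeled axiom graph `⟨⟨P⟩⟩` of a derivation. -/
def blaxg : Deriv α → BLGraph
  | .ax Γ A C => blwk (snames Γ) (BrS Γ) (blid A C)
  | .cut A P Q => BLGraph.comp (blaxg P) (blaxg Q) A.names
  | .sup P Q => (blaxg P).union (blaxg Q)
  | .orI _ _ P => blaxg P
  | .andI _ _ P Q => (blaxg P).union (blaxg Q)

/-- The (simple) axiom graph `⟦P⟧` of a derivation. -/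
def axg : Deriv α → NGraph
  | .ax Γ A C => (wkg Γ).union (idg A C)
  | .cut A P Q => NGraph.comp (axg P) (axg Q) A.names
  | .sup P Q => (axg P).union (axg Q)
  | .orI _ _ P => axg P
  | .andI _ _ P Q => (axg P).union (axg Q)

/-! ## Inversion and isolation -/

/-- Inversion of a disjunction `D ∨ E` in the conclusion. -/
def inv (D E : NForm α) : Deriv α → Deriv α
  | .ax Γ A C =>
      if A = NForm.or D E then
        match C with
        | .and C1 C2 =>
            .andI C1 C2 (.ax (insert E Γ) D C1) (.ax (insert D Γ) E C2)
        | _ => .ax Γ A C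
      else if C = NForm.or D E then
        match A with
        | .and A1 A2 =>
            .andI A1 A2 (.ax (insert E Γ) A1 D) (.ax (insert D Γ) A2 E)
        | _ => .ax Γ A C
      else
        .ax (insert D (insert E (Γ.erase (NForm.or D E)))) A C
  | .cut A P Q => .cut A (inv D E P) (inv D E Q)
  | .sup P Q => .sup (inv D E P) (inv D E Q)
  | .orI A B P => if A = D ∧ B = E then P else .orI A B (inv D E P)
  | .andI A B P Q => .andI A B (inv D E P) (inv D E Q)

/-- Left inversion of a conjunction `D ∧ E` in the conclusion. -/
def invl (D E : NForm α) : Deriv α → Deriv α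
  | .ax Γ A C =>
      if A = NForm.and D E then
        match C with
        | .or C1 C2 => .orI C1 C2 (.ax (insert C2 Γ) D C1)
        | _ => .ax Γ A C
      else if C = NForm.and D E then
        match A with
        | .or A1 A2 => .orI A1 A2 (.ax (insert A2 Γ) A1 D)
        | _ => .ax Γ A C
      else
        .ax (insert D (Γ.erase (NForm.and D E))) A C
  | .cut A P Q => .cut A (invl D E P) (invl D E Q)
  | .sup P Q => .sup (invl D E P) (invl D E Q)
  | .orI A B P => .orI A B (invl D E P)
  | .andI A B P Q => if A = D ∧ B = E then P else .andI A B (invl D E P) (invl D E Q)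

/-- Right inversion of a conjunction `D ∧ E` in the conclusion. -/
def invr (D E : NForm α) : Deriv α → Deriv α
  | .ax Γ A C =>
      if A = NForm.and D E then
        match C with
        | .or C1 C2 => .orI C1 C2 (.ax (insert C1 Γ) E C2)
        | _ => .ax Γ A C
      else if C = NForm.and D E then
        match A with
        | .or A1 A2 => .orI A1 A2 (.ax (insert A1 Γ) A2 E)
        | _ => .ax Γ A C
      else
        .ax (insert E (Γ.erase (NForm.and D E))) A C
  | .cut A P Q => .cut A (invr D E P) (invr D E Q)
  | .sup P Q => .sup (invr D E P) (invr D E Q)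
  | .orI A B P => .orI A B (invr D E P)
  | .andI A B P Q => if A = D ∧ B = E then Q else .andI A B (invr D E P) (invr D E Q)

/-- Isolation of a non-atomic formula in the conclusion. -/
def isl : NForm α → Deriv α → Deriv α
  | .or A B, P => .orI A B (inv A B P)
  | .and A B, P => .andI A B (invl A B P) (invr A B P)
  | .atom _ _, P => P

/-- Totality of a bl-graph w.r.t. a sharing-free named sequent. -/
def Total (bar : α → α) (G : BLGraph) (Γ : Finset (NForm α)) : Prop :=
  G.verts = snames Γ ∧
  G.Br = BrS Γ ∧
  ∀ x y : ℕ, s(x, y) ∈ G.Edges →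
    ∀ a b : α, HasAtomS Γ x a → HasAtomS Γ y b → a = bar b

end GS4

/-!
Inversion commutes with the rules or deletes an `∨`-rule, which leaves no trace in the graph, so
only axioms matter. If `A ∨ B` lies in the context of the axiom, replacing it by `A, B` is harmless
because weakening by `A ∨ B` is weakening by `A` followed by weakening by `B`. If `A ∨ B` is one of
the two dual formulas, then, as weakening distributes over unions, the graph of the expanded axiom
is the weakening of the recursive clause of the bl-identity on `A ∨ B`.
-/

namespace GS4

open scoped SetFamily

variable {α : Type}

theorem snames_insert (A : NForm α) (Γ : Finset (NForm α)) :
    snames (insert A Γ) = A.names ∪ snames Γ :=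
  Finset.set_biUnion_insert A Γ NForm.names

theorem names_subset_snames {A : NForm α} {Γ : Finset (NForm α)} (hA : A ∈ Γ) :
    A.names ⊆ snames Γ :=
  Set.subset_biUnion_of_mem (u := NForm.names) hA

theorem SFSet.disjoint_snames_erase {Γ : Finset (NForm α)} (hΓ : SFSet Γ) {A : NForm α}
    (hA : A ∈ Γ) : Disjoint A.names (snames (Γ.erase A)) := by
  refine Set.disjoint_iUnion₂_right.2 fun C hC => ?_
  obtain ⟨hCA, hCΓ⟩ := Finset.mem_erase.1 hC
  exact hΓ.2 A hA C hCΓ hCA.symm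

theorem subset_names_of_mem_BrF {A : NForm α} {X : Set ℕ} (hX : X ∈ BrF A) : X ⊆ A.names := by
  induction A generalizing X with
  | atom x a => exact (Set.mem_singleton_iff.1 hX).subset
  | or A B ihA ihB =>
    obtain ⟨Y, hY, Z, hZ, rfl⟩ := hX
    exact Set.union_subset_union (ihA hY) (ihB hZ)
  | and A B ihA ihB =>
    exact hX.elim (fun hA => (ihA hA).trans Set.subset_union_left)
      (fun hB => (ihB hB).trans Set.subset_union_right)

theorem BrF_or (A B : NForm α) : BrF (.or A B) = BrF A ⊻ BrF B := by
  ext X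
  simp only [BrF, Set.mem_ofPred_eq, Set.mem_sups, Set.sup_eq_union, eq_comm]

theorem inter_snames_mem_BrS {Γ : Finset (NForm α)} {X : Set ℕ}
    (hX : ∀ A ∈ Γ, X ∩ A.names ∈ BrF A) : X ∩ snames Γ ∈ BrS Γ := by
  refine ⟨Set.inter_subset_right, fun A hA => ?_⟩
  rw [Set.inter_assoc, Set.inter_eq_self_of_subset_right (names_subset_snames hA)]
  exact hX A hA

theorem union_mem_BrS_insert {A : NForm α} {Γ : Finset (NForm α)}
    (hAΓ : Disjoint A.names (snames Γ)) {Y Z : Set ℕ} (hY : Y ∈ BrF A) (hZ : Z ∈ BrS Γ) :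
    Y ∪ Z ∈ BrS (insert A Γ) := by
  have hYA : Y ⊆ A.names := subset_names_of_mem_BrF hY
  constructor
  · rw [snames_insert]
    exact Set.union_subset_union hYA hZ.1
  · refine (Finset.forall_mem_insert ..).2 ⟨?_, fun C hC => ?_⟩
    · rw [Set.union_inter_distrib_right, Set.inter_eq_self_of_subset_left hYA,
        (hAΓ.symm.mono_left hZ.1).inter_eq, Set.union_empty]
      exact hY
    · rw [Set.union_inter_distrib_right, (hAΓ.mono hYA (names_subset_snames hC)).inter_eq,
        Set.empty_union]
      exact hZ.2 C hC

theorem BrS_insert {A : NForm α} {Γ : Finset (NForm α)} (hAΓ : Disjoint A.names (snames Γ)) :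
    BrS (insert A Γ) = BrF A ⊻ BrS Γ := by
  ext X
  rw [Set.mem_sups]
  constructor
  · rintro ⟨hX, hbr⟩
    obtain ⟨hA, hΓ⟩ := (Finset.forall_mem_insert ..).1 hbr
    rw [snames_insert] at hX
    have hunion : X ∩ A.names ∪ X ∩ snames Γ = X := by
      rw [← Set.inter_union_distrib_left, Set.inter_eq_left.2 hX]
    exact ⟨X ∩ A.names, hA, X ∩ snames Γ, inter_snames_mem_BrS hΓ, hunion⟩
  · rintro ⟨Y, hY, Z, hZ, rfl⟩
    exact union_mem_BrS_insert hAΓ hY hZ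

theorem blwk_union (V : Set ℕ) (𝒴 : Set (Set ℕ)) (G H : BLGraph) :
    blwk V 𝒴 (G.union H) = (blwk V 𝒴 G).union (blwk V 𝒴 H) := by
  rw [blwk, blwk, blwk, BLGraph.union, BLGraph.union, Set.union_union_distrib_right]
  simp only [or_and_right, exists_or]

theorem blwk_blwk (V W : Set ℕ) (𝒴 𝒵 : Set (Set ℕ)) (G : BLGraph) :
    blwk W 𝒵 (blwk V 𝒴 G) = blwk (V ∪ W) (𝒴 ⊻ 𝒵) G := by
  simp only [blwk, BLGraph.mk.injEq, Set.union_assoc, true_and]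
  funext e X
  apply propext
  constructor
  · rintro ⟨_, Z, ⟨U, Y, hU, hY, rfl⟩, hZ, rfl⟩
    exact ⟨U, Y ∪ Z, hU, Set.mem_sups.2 ⟨Y, hY, Z, hZ, rfl⟩, Set.union_assoc ..⟩
  · rintro ⟨U, _, hU, hYZ, rfl⟩
    obtain ⟨Y, hY, Z, hZ, rfl⟩ := Set.mem_sups.1 hYZ
    exact ⟨U ∪ Y, Z, ⟨U, Y, hU, hY, rfl⟩, hZ, (Set.union_assoc ..).symm⟩

/-- The weakening `wk_A(G)` of a bl-graph by a single formula, as it occurs in the bl-identity. -/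
abbrev wkForm (A : NForm α) (G : BLGraph) : BLGraph := blwk A.names (BrF A) G

/-- The weakening `wk_Γ(G)` of a bl-graph by a sequent, as it occurs in the graph of an axiom. -/
abbrev wkSeq (Γ : Finset (NForm α)) (G : BLGraph) : BLGraph := blwk (snames Γ) (BrS Γ) G

theorem wkForm_or (A B : NForm α) (G : BLGraph) :
    wkForm (.or A B) G = wkForm B (wkForm A G) := by
  simp only [wkForm, NForm.names, BrF_or, blwk_blwk]

theorem wkSeq_insert {A : NForm α} {Γ : Finset (NForm α)} (hAΓ : Disjoint A.names (snames Γ))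
    (G : BLGraph) : wkSeq (insert A Γ) G = wkSeq Γ (wkForm A G) := by
  simp only [wkSeq, wkForm, snames_insert, BrS_insert hAΓ, blwk_blwk]

theorem wkSeq_insert_or {A B : NForm α} {Γ : Finset (NForm α)}
    (hAB : Disjoint A.names B.names) (hΓ : Disjoint (NForm.or A B).names (snames Γ))
    (G : BLGraph) : wkSeq (insert (.or A B) Γ) G = wkSeq (insert A (insert B Γ)) G := by
  obtain ⟨hAΓ, hBΓ⟩ := Set.disjoint_union_left.1 hΓ
  have hA : Disjoint A.names (snames (insert B Γ)) := by
    rw [snames_insert]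
    exact Set.disjoint_union_right.2 ⟨hAB, hAΓ⟩
  calc
    wkSeq (insert (.or A B) Γ) G = wkSeq Γ (wkForm (.or A B) G) := wkSeq_insert hΓ G
    _ = wkSeq Γ (wkForm B (wkForm A G)) := by rw [wkForm_or]
    _ = wkSeq (insert B Γ) (wkForm A G) := (wkSeq_insert hBΓ _).symm
    _ = wkSeq (insert A (insert B Γ)) G := (wkSeq_insert hA G).symm

theorem wkSeq_insert_union_wkSeq_insert {A B : NForm α} {Γ : Finset (NForm α)}
    (hAΓ : Disjoint A.names (snames Γ)) (hBΓ : Disjoint B.names (snames Γ)) (G H : BLGraph) :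
    (wkSeq (insert B Γ) G).union (wkSeq (insert A Γ) H) =
      wkSeq Γ ((wkForm B G).union (wkForm A H)) := by
  rw [wkSeq_insert hAΓ, wkSeq_insert hBΓ, ← blwk_union]

theorem blaxg_inv_ax_or_left {A B C₁ C₂ : NForm α} {Γ : Finset (NForm α)}
    (hΓ : Disjoint (NForm.or A B).names (snames Γ)) :
    blaxg (inv A B (.ax Γ (.or A B) (.and C₁ C₂))) = blaxg (.ax Γ (.or A B) (.and C₁ C₂)) := by
  obtain ⟨hAΓ, hBΓ⟩ := Set.disjoint_union_left.1 hΓ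
  simp only [inv, if_true]
  exact wkSeq_insert_union_wkSeq_insert hAΓ hBΓ _ _

theorem blaxg_inv_ax_or_right {A B C₁ C₂ : NForm α} {Γ : Finset (NForm α)}
    (hΓ : Disjoint (NForm.or A B).names (snames Γ)) :
    blaxg (inv A B (.ax Γ (.and C₁ C₂) (.or A B))) = blaxg (.ax Γ (.and C₁ C₂) (.or A B)) := by
  obtain ⟨hAΓ, hBΓ⟩ := Set.disjoint_union_left.1 hΓ
  simp only [inv, reduceCtorEq, if_false, if_true]
  exact wkSeq_insert_union_wkSeq_insert hAΓ hBΓ _ _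

theorem blaxg_inv_ax_of_mem {A B F C : NForm α} {Γ : Finset (NForm α)} (hΓ : SFSet Γ)
    (hF : F ≠ .or A B) (hC : C ≠ .or A B) (h : NForm.or A B ∈ Γ) :
    blaxg (inv A B (.ax Γ F C)) = blaxg (.ax Γ F C) := by
  have hAB : Disjoint A.names B.names := (hΓ.1 _ h).2.2
  simp only [inv, if_neg hF, if_neg hC]
  calc
    wkSeq (insert A (insert B (Γ.erase (.or A B)))) (blid F C)
      = wkSeq (insert (.or A B) (Γ.erase (.or A B))) (blid F C) :=
        (wkSeq_insert_or hAB (hΓ.disjoint_snames_erase h) _).symm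
    _ = wkSeq Γ (blid F C) := by rw [Finset.insert_erase h]

theorem exists_eq_and_of_shape_eq_and {A : NForm α} {S T : Shape α} (h : A.shape = .and S T) :
    ∃ B C, A = .and B C := by
  cases A with
  | and B C => exact ⟨B, C, rfl⟩
  | atom | or => cases h

theorem exists_eq_and_of_shape_negF_eq_or {bar : α → α} {A : NForm α} {S T : Shape α}
    (h : (negF bar A).shape = .or S T) : ∃ B C, A = .and B C := by
  cases A with
  | and B C => exact ⟨B, C, rfl⟩
  | atom | or => cases h

theorem blaxg_inv_ax {bar : α → α} {A B F C : NForm α} {Γ : Finset (NForm α)}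
    (hP : WF bar (.ax Γ F C)) (h : NForm.or A B ∈ concl (.ax Γ F C)) :
    blaxg (inv A B (.ax Γ F C)) = blaxg (.ax Γ F C) := by
  obtain ⟨hshape, -, -, hΓ, -, hFΓ, hCΓ⟩ := hP
  by_cases hF : F = .or A B
  · subst hF
    obtain ⟨C₁, C₂, rfl⟩ := exists_eq_and_of_shape_negF_eq_or hshape.symm
    exact blaxg_inv_ax_or_left hFΓ
  by_cases hC : C = .or A B
  · subst hC
    obtain ⟨F₁, F₂, rfl⟩ := exists_eq_and_of_shape_eq_and hshape
    exact blaxg_inv_ax_or_right hCΓ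
  have hmem : NForm.or A B ∈ Γ :=
    Finset.mem_of_mem_insert_of_ne (Finset.mem_of_mem_insert_of_ne h (Ne.symm hF)) (Ne.symm hC)
  exact blaxg_inv_ax_of_mem hΓ hF hC hmem

theorem mem_concl_premises_of_cut {bar : α → α} {C F : NForm α} {P Q : Deriv α}
    (hP : WF bar (.cut F P Q)) (hC : C ∈ concl (.cut F P Q)) : C ∈ concl P ∧ C ∈ concl Q := by
  obtain ⟨-, -, Γ, -, -, hcP, hcQ, -⟩ := hP
  obtain ⟨hCF, hCP⟩ := Finset.mem_erase.1 hC
  have hCΓ : C ∈ Γ := Finset.mem_of_mem_insert_of_ne (hcP ▸ hCP) hCF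
  exact ⟨hCP, hcQ ▸ Finset.mem_insert_of_mem hCΓ⟩

theorem mem_concl_premise_of_orI {C F G : NForm α} {P : Deriv α} (hne : C ≠ .or F G)
    (hC : C ∈ concl (.orI F G P)) : C ∈ concl P :=
  Finset.mem_of_mem_erase (Finset.mem_of_mem_erase (Finset.mem_of_mem_insert_of_ne hC hne))

theorem mem_concl_premises_of_andI {bar : α → α} {C F G : NForm α} {P Q : Deriv α}
    (hP : WF bar (.andI F G P Q)) (hne : C ≠ .and F G) (hC : C ∈ concl (.andI F G P Q)) :
    C ∈ concl P ∧ C ∈ concl Q := by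
  obtain ⟨-, -, Γ, -, -, hcP, hcQ, -⟩ := hP
  obtain ⟨hCF, hCP⟩ := Finset.mem_erase.1 (Finset.mem_of_mem_insert_of_ne hC hne)
  have hCΓ : C ∈ Γ := Finset.mem_of_mem_insert_of_ne (hcP ▸ hCP) hCF
  exact ⟨hCP, hcQ ▸ Finset.mem_insert_of_mem hCΓ⟩

theorem blaxg_inv_or_general (bar : α → α) (P : Deriv α) (hP : WF bar P) (A B : NForm α)
    (h : NForm.or A B ∈ concl P) : blaxg (inv A B P) = blaxg P := by
  induction P with
  | ax Γ F C => exact blaxg_inv_ax hP h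
  | cut F P Q ihP ihQ =>
    obtain ⟨hmemP, hmemQ⟩ := mem_concl_premises_of_cut hP h
    rw [inv, blaxg, blaxg, ihP hP.1 hmemP, ihQ hP.2.1 hmemQ]
  | sup P Q ihP ihQ =>
    obtain ⟨hWP, hWQ, hconcl⟩ := hP
    rw [inv, blaxg, blaxg, ihP hWP h, ihQ hWQ (hconcl ▸ h)]
  | orI F G P ih =>
    by_cases hFG : F = A ∧ G = B
    · rw [inv, if_pos hFG, blaxg]
    · have hne : NForm.or A B ≠ .or F G := fun heq =>
        hFG ((NForm.or.inj heq).imp Eq.symm Eq.symm)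
      rw [inv, if_neg hFG, blaxg, blaxg, ih hP.1 (mem_concl_premise_of_orI hne h)]
  | andI F G P Q ihP ihQ =>
    have hne : NForm.or A B ≠ .and F G := nofun
    obtain ⟨hmemP, hmemQ⟩ := mem_concl_premises_of_andI hP hne h
    rw [inv, blaxg, blaxg, ihP hP.1 hmemP, ihQ hP.2.1 hmemQ]

end GS4

/-- the branch-labeled axiom graph is invariant under inversion
of a disjunction in the conclusion. -/
theorem GS4.blaxg_inv_or {α : Type} (bar : α → α)
    (hbar : Function.Involutive bar) (hfix : ∀ a, bar a ≠ a)
    (P : GS4.Deriv α) (hP : GS4.WF bar P)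
    (A B : GS4.NForm α) (h : GS4.NForm.or A B ∈ GS4.concl P) :
    GS4.blaxg (GS4.inv A B P) = GS4.blaxg P := by
  exact blaxg_inv_or_general bar P hP A B h
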